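/- Let M = c + εD ∈ 𝔻ℍ[t] be a bounded monic reduced translational motion polynomial of degree 2m with c ∈ ℝ[t], D ∈ ℍ[t], and ν(M) = c² = N^{2m} for some irreducible quadratic N ∈ ℝ[t]. If M admits a factorization into monic linear motion polynomial factors, then there exist quaternions p₁, …, p_m, d₁, …, d_m, d'₁, …, d'_m ∈ ℍ such that M = (t − p₁ − εd₁)⋯(t − p_m − εd_m)·(t − p_m* − εd'_m)⋯(t − p₁* − εd'₁), where every displayed linear factor is a motion polynomial. -/

import Mathlib

open Polynomial DualNumber TrivSqZeroExt

noncomputable section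

/-- The real quaternions. -/
abbrev Hq : Type := Quaternion ℝ

/-- The dual quaternions. -/
abbrev DHq : Type := DualNumber Hq

/-- Conjugation of a dual quaternion: `(p + ε d)* = p* + ε d*`. -/
instance : Star DHq := ⟨fun x => inl (star x.fst) + inr (star x.snd)⟩

/-- Coefficient-wise (quaternion) conjugation of a polynomial. -/
def cstar {R : Type*} [Semiring R] [Star R] (A : R[X]) : R[X] :=
  A.sum fun n a => Polynomial.C (star a) * Polynomial.X ^ n

/-- The embedding `ℝ[t] → ℍ[t]`. -/
def qPoly (f : ℝ[X]) : Hq[X] := f.map (algebraMap ℝ Hq)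

/-- The embedding `ℍ[t] → 𝔻ℍ[t]` (primal part). -/
def dhQ (P : Hq[X]) : DHq[X] := P.map (inlHom Hq Hq)

/-- The embedding `ℝ[t] → 𝔻ℍ[t]`. -/
def dPoly (f : ℝ[X]) : DHq[X] := dhQ (qPoly f)

/-- The dual quaternion polynomial `P + ε D` with primal part `P` and dual part `D`. -/
def mp (P D : Hq[X]) : DHq[X] := dhQ P + Polynomial.C ε * dhQ D

/-- The primal part of a dual quaternion polynomial. -/
def primal (A : DHq[X]) : Hq[X] := A.map (fstHom ℝ Hq Hq).toRingHom

/-- A motion polynomial: a dual quaternion polynomial whose norm polynomial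
`ν(M) = M·M*` is a nonzero real polynomial. -/
def IsMotion (M : DHq[X]) : Prop := ∃ f : ℝ[X], f ≠ 0 ∧ M * cstar M = dPoly f

/-- A real polynomial divides a quaternion polynomial. -/
def RDvdQ (f : ℝ[X]) (A : Hq[X]) : Prop := ∃ B : Hq[X], A = qPoly f * B

/-- A real polynomial divides a dual quaternion polynomial. -/
def RDvdD (f : ℝ[X]) (A : DHq[X]) : Prop := ∃ B : DHq[X], A = dPoly f * B

/-- `g` is the greatest common monic real polynomial divisor of a quaternion polynomial `A`
(with itself), i.e. `g = mrpf A`. -/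
def IsMrpfQ (g : ℝ[X]) (A : Hq[X]) : Prop :=
  g.Monic ∧ RDvdQ g A ∧ ∀ f : ℝ[X], f.Monic → RDvdQ f A → f ∣ g

/-- `g` is the greatest common monic real polynomial divisor of `c ∈ ℝ[t]` and a quaternion
polynomial `A`, i.e. `g = mrpf(c, A)`. -/
def IsMrpf2 (g : ℝ[X]) (c : ℝ[X]) (A : Hq[X]) : Prop :=
  g.Monic ∧ g ∣ c ∧ RDvdQ g A ∧
    ∀ f : ℝ[X], f.Monic → f ∣ c → RDvdQ f A → f ∣ g

/-- `g` is the greatest common monic real polynomial divisor of `c ∈ ℝ[t]` and two quaternion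
polynomials `A` and `B`, i.e. `g = mrpf(c, A, B)`. -/
def IsMrpf3 (g : ℝ[X]) (c : ℝ[X]) (A B : Hq[X]) : Prop :=
  g.Monic ∧ g ∣ c ∧ RDvdQ g A ∧ RDvdQ g B ∧
    ∀ f : ℝ[X], f.Monic → f ∣ c → RDvdQ f A → RDvdQ f B → f ∣ g

/-- A quaternion polynomial is reduced: `mrpf = 1`, i.e. it has only constant real
polynomial factors. -/
def ReducedQ (A : Hq[X]) : Prop := ∀ f : ℝ[X], f.Monic → RDvdQ f A → f = 1

/-- A dual quaternion polynomial is reduced: `mrpf = 1`. -/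
def ReducedD (A : DHq[X]) : Prop := ∀ f : ℝ[X], f.Monic → RDvdD f A → f = 1

/-- Boundedness of a (monic reduced) motion polynomial: `mrpf` of its primal part has
no real root, equivalently no linear real polynomial `t - a` divides the primal part. -/
def BoundedD (M : DHq[X]) : Prop :=
  ∀ a : ℝ, ¬ RDvdQ (Polynomial.X - Polynomial.C a) (primal M)

/-- A generic motion polynomial: monic, a motion polynomial, with `mrpf` of the primal
part equal to `1`. -/
def GenericD (M : DHq[X]) : Prop :=
  M.Monic ∧ IsMotion M ∧ ReducedQ (primal M)

/-- The monic linear dual quaternion polynomial `t - p - ε d`. -/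
def lin (p d : Hq) : DHq[X] := mp (Polynomial.X - Polynomial.C p) (-Polynomial.C d)

/-- `M` admits a factorization into monic linear motion polynomial factors. -/
def HasLinFact (M : DHq[X]) : Prop :=
  ∃ L : List DHq, (∀ h ∈ L, IsMotion (Polynomial.X - Polynomial.C h)) ∧
    M = (L.map fun h => Polynomial.X - Polynomial.C h).prod

end

/-!
Write `ν_p = (t - p)(t - p*) ∈ ℝ[t]`. Taking norms in the primal part `(t - p₁)⋯(t - p₂ₘ) = Nᵐ` of
a factorization shows that every `ν_{pᵢ}` divides a power of `N`, so `ν_{pᵢ} = N`. Split the product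
in the middle as `U V`. Since also `U U* = Nᵐ`, cancelling `U` gives `V = U*`; in particular `N`
divides `U` if and only if it divides `V`. If it divided both, then `ε² = 0` would make `N` a factor
of the dual quaternion product, which is reduced. So `N` divides neither, and a polynomial not
divisible by `N` is in at most one way a product of linear factors of norm `N`. Hence the factors
of `V` are, in the reverse order, the conjugates of those of `U`.
-/

section LinProd

variable {R S : Type*} [Ring R] [Ring S]

/-- The product `(t - a₁)⋯(t - aₙ)` of monic linear polynomials, in the order of the list;
the order matters since `R` need not be commutative. -/
noncomputable def linProd (l : List R) : R[X] := (l.map fun a => X - C a).prod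

lemma linProd_append (l l' : List R) : linProd (l ++ l') = linProd l * linProd l' := by
  simp [linProd]

lemma linProd_concat (l : List R) (a : R) : linProd (l ++ [a]) = linProd l * (X - C a) := by
  simp [linProd]

lemma map_linProd (f : R →+* S) (l : List R) : (linProd l).map f = linProd (l.map f) := by
  rw [← coe_mapRingHom, linProd, map_list_prod]
  simp [linProd, Function.comp_def]

lemma monic_linProd (l : List R) : (linProd l).Monic := by
  induction l using List.reverseRecOn with
  | nil => exact monic_one
  | append_singleton l a ih => rw [linProd_concat]; exact ih.mul (monic_X_sub_C a)

lemma natDegree_linProd [Nontrivial R] (l : List R) : (linProd l).natDegree = l.length := by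
  induction l using List.reverseRecOn with
  | nil => simp [linProd]
  | append_singleton l a ih =>
    rw [linProd_concat, (monic_linProd l).natDegree_mul (monic_X_sub_C a), ih,
      natDegree_X_sub_C, List.length_append, List.length_singleton]

end LinProd

section Conjugation

variable {R : Type*} [Semiring R] [StarRing R]

lemma coeff_cstar (A : R[X]) (n : ℕ) : (cstar A).coeff n = star (A.coeff n) := by
  simp only [cstar, Polynomial.sum, finsetSum_coeff, coeff_C_mul_X_pow, Finset.sum_ite_eq]
  split_ifs with hn
  · rfl
  · rw [notMem_support_iff.1 hn, star_zero]

lemma cstar_cstar (A : R[X]) : cstar (cstar A) = A := by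
  ext n
  rw [coeff_cstar, coeff_cstar, star_star]

lemma cstar_eq_unop (A : R[X]) :
    cstar A = ((opRingEquiv R).symm (A.map (starRingEquiv : R ≃+* Rᵐᵒᵖ).toRingHom)).unop := by
  apply MulOpposite.op_injective
  apply (opRingEquiv R).injective
  ext n
  simp [coeff_cstar]

lemma cstar_one : cstar (1 : R[X]) = 1 := by
  ext n
  rw [coeff_cstar, coeff_one]
  split_ifs <;> simp

lemma cstar_mul (A B : R[X]) : cstar (A * B) = cstar B * cstar A := by
  simp only [cstar_eq_unop, Polynomial.map_mul, map_mul, MulOpposite.unop_mul]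

end Conjugation

lemma cstar_X_sub_C {R : Type*} [Ring R] [StarRing R] (a : R) :
    cstar (X - C a) = X - C (star a) := by
  ext n
  rw [coeff_cstar, coeff_sub, coeff_sub, coeff_X, coeff_C, coeff_C]
  split_ifs <;> simp

lemma cstar_linProd {R : Type*} [Ring R] [StarRing R] (l : List R) :
    cstar (linProd l) = linProd (l.map star).reverse := by
  induction l with
  | nil => exact cstar_one
  | cons a l ih =>
    rw [← List.singleton_append, linProd_append, cstar_mul, ih, List.map_append,
      List.reverse_append, linProd_append]
    simp [linProd, cstar_X_sub_C]

lemma qPoly_mul (f g : ℝ[X]) : qPoly (f * g) = qPoly f * qPoly g :=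
  Polynomial.map_mul _

lemma qPoly_injective : Function.Injective qPoly :=
  map_injective _ (algebraMap ℝ Hq).injective

lemma commute_qPoly (f : ℝ[X]) (A : Hq[X]) : Commute (qPoly f) A :=
  let := Polynomial.algebra ℝ Hq
  Algebra.commutes f A

lemma commute_dPoly (f : ℝ[X]) (A : DHq[X]) : Commute (dPoly f) A := by
  let := Polynomial.algebra ℝ DHq
  have : dPoly f = algebraMap ℝ[X] DHq[X] f := Polynomial.map_map _ _ f
  rw [this]
  exact Algebra.commutes f A

lemma cstar_qPoly (f : ℝ[X]) : cstar (qPoly f) = qPoly f := by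
  ext1 n
  rw [coeff_cstar, qPoly, coeff_map]
  exact Quaternion.star_coe _

lemma qPoly_dvd_cstar {f : ℝ[X]} {A : Hq[X]} (h : qPoly f ∣ A) : qPoly f ∣ cstar A := by
  obtain ⟨B, rfl⟩ := h
  exact ⟨cstar B, by rw [cstar_mul, cstar_qPoly, (commute_qPoly f _).eq]⟩

/-- The norm polynomial `ν(t - p) = t² - 2 Re(p) t + |p|²` of the linear polynomial `t - p`, as a
real polynomial. -/
noncomputable def linNorm (p : Hq) : ℝ[X] := X ^ 2 - C (2 * p.re) * X + C (Quaternion.normSq p)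

lemma X_sub_C_mul_X_sub_C_star (p : Hq) :
    (X - C p) * (X - C (star p)) = qPoly (linNorm p) := by
  have expand : (X - C p) * (X - C (star p)) = X ^ 2 - C (p + star p) * X + C (p * star p) := by
    rw [sub_mul, mul_sub, mul_sub, X_mul_C, C_add, C_mul]
    noncomm_ring
  rw [expand, Quaternion.self_add_star', Quaternion.self_mul_star]
  simp [qPoly, linNorm]

lemma natDegree_linNorm (p : Hq) : (linNorm p).natDegree = 2 := by
  unfold linNorm
  compute_degree!

lemma monic_linNorm (p : Hq) : (linNorm p).Monic := by
  unfold linNorm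
  monicity!

lemma linNorm_eq_of_dvd_pow {N : ℝ[X]} (hmonic : N.Monic) (hirr : Irreducible N)
    (hdeg : N.natDegree = 2) {p : Hq} {k : ℕ} (h : linNorm p ∣ N ^ k) : linNorm p = N := by
  obtain ⟨i, -, hi⟩ := (dvd_prime_pow hirr.prime k).1 h
  have hpow : linNorm p = N ^ i := eq_of_monic_of_associated (monic_linNorm p) (hmonic.pow i) hi
  have hi_one : i = 1 := by
    have htwo := natDegree_linNorm p
    rw [hpow, hmonic.natDegree_pow, hdeg] at htwo
    omega
  rw [hpow, hi_one, pow_one]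

lemma linProd_mul_cstar (l : List Hq) :
    linProd l * cstar (linProd l) = qPoly (l.map linNorm).prod := by
  induction l using List.reverseRecOn with
  | nil => simp [linProd, qPoly, cstar_one]
  | append_singleton l p ih =>
    calc linProd (l ++ [p]) * cstar (linProd (l ++ [p]))
        = linProd l * ((X - C p) * (X - C (star p))) * cstar (linProd l) := by
          rw [linProd_concat, cstar_mul, cstar_X_sub_C]
          simp only [mul_assoc]
      _ = linProd l * cstar (linProd l) * qPoly (linNorm p) := by
          rw [X_sub_C_mul_X_sub_C_star, mul_assoc, mul_assoc, (commute_qPoly _ _).eq]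
      _ = qPoly ((l ++ [p]).map linNorm).prod := by
          rw [ih, ← qPoly_mul, List.map_append, List.prod_append, List.map_singleton,
            List.prod_singleton]

lemma linNorm_eq_of_linProd_eq {N : ℝ[X]} (hmonic : N.Monic) (hirr : Irreducible N)
    (hdeg : N.natDegree = 2) {l : List Hq} {k : ℕ} (h : linProd l = qPoly (N ^ k)) :
    ∀ p ∈ l, linNorm p = N := by
  intro p hp
  have hprod : (l.map linNorm).prod = N ^ (k + k) := by
    apply qPoly_injective
    rw [← linProd_mul_cstar, h, cstar_qPoly, ← qPoly_mul, pow_add]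
  exact linNorm_eq_of_dvd_pow hmonic hirr hdeg
    (hprod ▸ List.dvd_prod (List.mem_map_of_mem hp))

lemma eq_of_mul_X_sub_C_eq {N : ℝ[X]} {A B : Hq[X]} {p q : Hq} (hp : linNorm p = N)
    (hq : linNorm q = N) (h : A * (X - C p) = B * (X - C q))
    (hN : ¬ qPoly N ∣ A * (X - C p)) : p = q := by
  by_contra hpq
  have hunit : IsUnit (C (star q - star p)) :=
    isUnit_C.2 (sub_ne_zero.2 (star_injective.ne (Ne.symm hpq))).isUnit
  refine hN ((hunit.dvd_mul_right).1 ⟨A - B, ?_⟩)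
  calc A * (X - C p) * C (star q - star p)
      = A * (X - C p) * (X - C (star p)) - B * (X - C q) * (X - C (star q)) := by
        rw [← h, ← mul_sub, C_sub, sub_sub_sub_cancel_left]
    _ = A * qPoly N - B * qPoly N := by
        rw [mul_assoc, mul_assoc, X_sub_C_mul_X_sub_C_star, X_sub_C_mul_X_sub_C_star, hp, hq]
    _ = qPoly N * (A - B) := by rw [← sub_mul, (commute_qPoly N _).eq]

theorem eq_of_linProd_eq_of_not_dvd {N : ℝ[X]} {l l' : List Hq} (hl : ∀ p ∈ l, linNorm p = N)
    (hl' : ∀ p ∈ l', linNorm p = N) (h : linProd l = linProd l') (hN : ¬ qPoly N ∣ linProd l) :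
    l = l' := by
  have hlen : l.length = l'.length := by rw [← natDegree_linProd, h, natDegree_linProd]
  induction l using List.reverseRecOn generalizing l' with
  | nil => exact (List.length_eq_zero_iff.1 hlen.symm).symm
  | append_singleton l p ih =>
    rcases List.eq_nil_or_concat' l' with rfl | ⟨l', q, rfl⟩
    · simp at hlen
    simp only [List.forall_mem_append, List.forall_mem_singleton] at hl hl'
    rw [linProd_concat] at h hN
    rw [linProd_concat] at h
    obtain rfl : p = q := eq_of_mul_X_sub_C_eq hl.2 hl'.2 h hN
    have htail : linProd l = linProd l' := mul_right_cancel₀ (X_sub_C_ne_zero p) h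
    rw [ih hl.1 hl'.1 htail (fun hdvd => hN (hdvd.mul_right _)) (by simpa using hlen)]

theorem eq_reverse_map_star_of_linProd_mul_eq_pow {N : ℝ[X]} (hmonic : N.Monic)
    (hirr : Irreducible N) (hdeg : N.natDegree = 2) {u v : List Hq}
    (h : linProd u * linProd v = qPoly (N ^ u.length))
    (hN : ¬ (qPoly N ∣ linProd u ∧ qPoly N ∣ linProd v)) : v = (u.map star).reverse := by
  have hroots : ∀ p ∈ u ++ v, linNorm p = N :=
    linNorm_eq_of_linProd_eq hmonic hirr hdeg ((linProd_append u v).trans h)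
  obtain ⟨hu, hv⟩ := List.forall_mem_append.1 hroots
  have hnorm : linProd u * cstar (linProd u) = qPoly (N ^ u.length) := by
    rw [linProd_mul_cstar, List.prod_eq_pow_card _ N (by simpa using hu), List.length_map]
  have hconj : linProd v = cstar (linProd u) :=
    mul_left_cancel₀ (monic_linProd u).ne_zero (h.trans hnorm.symm)
  have hnot_dvd : ¬ qPoly N ∣ linProd v := fun hdvd =>
    hN ⟨by simpa only [hconj, cstar_cstar] using qPoly_dvd_cstar hdvd, hdvd⟩
  have hu_star : ∀ p ∈ (u.map star).reverse, linNorm p = N := by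
    simpa [linNorm] using hu
  exact eq_of_linProd_eq_of_not_dvd hv hu_star (hconj.trans (cstar_linProd u)) hnot_dvd

lemma primal_mul (A B : DHq[X]) : primal (A * B) = primal A * primal B :=
  Polynomial.map_mul _

lemma primal_dhQ (P : Hq[X]) : primal (dhQ P) = P := by
  ext1 n
  simp [primal, dhQ]

lemma primal_mp (P D : Hq[X]) : primal (mp P D) = P := by
  ext1 n
  simp [primal, mp, dhQ]

lemma primal_linProd (L : List DHq) : primal (linProd L) = linProd (L.map fst) :=
  map_linProd _ L

lemma mul_eq_zero_of_primal_eq_zero {A B : DHq[X]} (hA : primal A = 0) (hB : primal B = 0) :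
    A * B = 0 := by
  have hA' (n : ℕ) : (A.coeff n).fst = 0 := by simpa [primal] using congrArg (coeff · n) hA
  have hB' (n : ℕ) : (B.coeff n).fst = 0 := by simpa [primal] using congrArg (coeff · n) hB
  ext1 n
  rw [coeff_mul, coeff_zero]
  exact Finset.sum_eq_zero fun x _ => TrivSqZeroExt.ext (by simp [hA']) (by simp [hA', hB'])

lemma dPoly_dvd_mul_of_dvd_primal {f : ℝ[X]} {A B : DHq[X]} (hA : qPoly f ∣ primal A)
    (hB : qPoly f ∣ primal B) : dPoly f ∣ A * B := by
  obtain ⟨P, hP⟩ := hA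
  obtain ⟨Q, hQ⟩ := hB
  have primal_sub_eq_zero {A : DHq[X]} {P : Hq[X]} (h : primal A = qPoly f * P) :
      primal (A - dPoly f * dhQ P) = 0 := by
    have : primal (dPoly f * dhQ P) = qPoly f * P := by
      rw [primal_mul, dPoly, primal_dhQ, primal_dhQ]
    exact (Polynomial.map_sub _).trans (sub_eq_zero.2 (h.trans this.symm))
  have hzero : (A - dPoly f * dhQ P) * (B - dPoly f * dhQ Q) = 0 :=
    mul_eq_zero_of_primal_eq_zero (primal_sub_eq_zero hP) (primal_sub_eq_zero hQ)
  have hsplit : A * B = dPoly f * (dhQ P * B) + (A - dPoly f * dhQ P) * (dPoly f * dhQ Q) := by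
    rw [mul_sub, sub_eq_zero] at hzero
    rw [← hzero, sub_mul, ← mul_assoc, add_sub_cancel]
  rw [hsplit, ← mul_assoc _ (dPoly f), ← (commute_dPoly f _).eq, mul_assoc]
  exact dvd_add (dvd_mul_right _ _) (dvd_mul_right _ _)

theorem map_fst_reverse_eq_of_not_dPoly_dvd {N : ℝ[X]} (hmonic : N.Monic) (hirr : Irreducible N)
    (hdeg : N.natDegree = 2) {U V : List DHq}
    (h : primal (linProd U * linProd V) = qPoly (N ^ U.length))
    (hN : ¬ dPoly N ∣ linProd U * linProd V) :
    V.reverse.map fst = U.map fun a => star a.fst := by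
  rw [primal_mul, primal_linProd, primal_linProd, ← U.length_map (f := fst)] at h
  have hsymm := eq_reverse_map_star_of_linProd_mul_eq_pow hmonic hirr hdeg h fun hdvd =>
    hN (dPoly_dvd_mul_of_dvd_primal (by rw [primal_linProd]; exact hdvd.1)
      (by rw [primal_linProd]; exact hdvd.2))
  rw [List.map_reverse, hsymm, List.reverse_reverse, List.map_map, Function.comp_def]

lemma lin_fst_snd (a : DHq) : lin a.fst a.snd = X - C a := by
  calc lin a.fst a.snd = X - C (inl a.fst) + C (ε * inl (-a.snd)) := by
        simp only [lin, mp, dhQ, ← C_neg, Polynomial.map_sub, map_X, map_C, inlHom_apply, C_mul]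
    _ = X - C (inl a.fst - ε * inl (-a.snd)) := by rw [C_sub, sub_add]
    _ = X - C a := by
        congr 2
        ext <;> simp

lemma exists_ofFn_lin_of_map_fst_eq {U W : List DHq}
    (h : W.map fst = U.map fun a => star a.fst) :
    ∃ p d d' : Fin U.length → Hq,
      (List.ofFn fun i => lin (p i) (d i)) = U.map (fun a => X - C a) ∧
      (List.ofFn fun i => lin (star (p i)) (d' i)) = W.map (fun a => X - C a) := by
  have hlen : W.length = U.length := by simpa using congrArg List.length h
  have hfst (i : Fin U.length) : (W[i]).fst = star (U[i]).fst := by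
    have hi := List.getElem_of_eq h (i := i) (by simp [hlen])
    rwa [List.getElem_map, List.getElem_map] at hi
  refine ⟨fun i => (U[i]).fst, fun i => (U[i]).snd, fun i => (W[i]).snd, ?_, ?_⟩
  · simp only [lin_fst_snd]
    exact List.ofFn_getElem_eq_map U fun a => X - C a
  · simp only [← hfst, lin_fst_snd]
    exact List.ext_getElem (by simp [hlen]) (by simp)

lemma exists_monic_irreducible_eq_pow {K : Type*} [Field K] {c N : K[X]} {n m : ℕ} (hn : n ≠ 0)
    (hc : c.Monic) (hN : Irreducible N) (h : c ^ n = N ^ (n * m)) :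
    ∃ N₀ : K[X], N₀.Monic ∧ Irreducible N₀ ∧ N₀.natDegree = N.natDegree ∧ c = N₀ ^ m := by
  classical
  have hassoc : Associated (normalize N) N := normalize_associated N
  have hmonic : (normalize N).Monic := monic_normalize hN.ne_zero
  have hpow : c ^ n = (N ^ m) ^ n := by rw [h, mul_comm, pow_mul]
  have hcN : Associated c (N ^ m) := associated_of_dvd_dvd
    ((UniqueFactorizationMonoid.pow_dvd_pow_iff_dvd hn).1 hpow.dvd)
    ((UniqueFactorizationMonoid.pow_dvd_pow_iff_dvd hn).1 hpow.symm.dvd)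
  exact ⟨normalize N, hmonic, hassoc.symm.irreducible hN,
    natDegree_eq_of_degree_eq degree_normalize,
    eq_of_monic_of_associated hc (hmonic.pow m) (hcN.trans (hassoc.pow_pow.symm))⟩

/-- Shape of a linear factorization of a bounded monic reduced translational motion
polynomial of primary norm. -/
theorem translational_primary_factorization_shape
    (m : ℕ) (c : ℝ[X]) (D : Hq[X]) (N : ℝ[X]) (M : DHq[X])
    (hM : M = mp (qPoly c) D)
    (hmonic : M.Monic) (hmotion : IsMotion M)
    (hred : ReducedD M) (hbdd : BoundedD M)
    (hdeg : M.natDegree = 2 * m)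
    (hN2 : N.natDegree = 2) (hNirr : Irreducible N)
    (hcN : c ^ 2 = N ^ (2 * m))
    (hnorm : M * cstar M = dPoly (c ^ 2))
    (hfact : HasLinFact M) :
    ∃ p d d' : Fin m → Hq,
      (∀ i, IsMotion (lin (p i) (d i))) ∧
      (∀ i, IsMotion (lin (star (p i)) (d' i))) ∧
      M = (List.ofFn fun i => lin (p i) (d i)).prod *
          ((List.ofFn fun i => lin (star (p i)) (d' i)).reverse).prod := by
  obtain ⟨L, hL, hML⟩ := hfact
  have hprimal : primal M = qPoly c := hM ▸ primal_mp _ _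
  have hc : c.Monic :=
    monic_of_injective (algebraMap ℝ Hq).injective (hprimal ▸ hmonic.map _ : (qPoly c).Monic)
  obtain ⟨N₀, hN₀, hN₀irr, hN₀deg, rfl⟩ := exists_monic_irreducible_eq_pow two_ne_zero hc hNirr hcN
  have hlen : L.length = 2 * m := by rw [← natDegree_linProd, ← hdeg, hML]; rfl
  obtain ⟨U, V, rfl, rfl⟩ : ∃ U V, L = U ++ V ∧ U.length = m :=
    ⟨L.take m, L.drop m, (L.take_append_drop m).symm, by rw [List.length_take]; omega⟩
  obtain rfl : M = linProd U * linProd V := hML.trans (linProd_append U V)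
  have hsymm := map_fst_reverse_eq_of_not_dPoly_dvd hN₀ hN₀irr (hN₀deg.trans hN2) hprimal
    fun hdvd => hN₀irr.ne_one (hred N₀ hN₀ hdvd)
  obtain ⟨p, d, d', hU, hV⟩ := exists_ofFn_lin_of_map_fst_eq hsymm
  refine ⟨p, d, d', List.forall_mem_ofFn_iff.1 ?_, List.forall_mem_ofFn_iff.1 ?_, ?_⟩
  · rw [hU]
    exact List.forall_mem_map.2 fun h hh => hL h (List.mem_append_left V hh)
  · rw [hV]
    exact List.forall_mem_map.2 fun h hh => hL h (List.mem_append_right U (List.mem_reverse.1 hh))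
  · rw [hU, hV, List.map_reverse, List.reverse_reverse]
    rfl
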